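/- Fix ρ > 0 and let (γ_n) be a sequence of positive reals with γ_n/n → ρ as n → ∞. Define T_n = (1/κ_n)·(n·κ_n/(γ_n·κ_{n-1}))ⁿ. Then (1/n)·ln T_n → −ln ρ − 1/2 as n → ∞; consequently T_n → 0 if ρ > 1/√e, and T_n → ∞ if ρ < 1/√e. -/

import Mathlib

open Filter Real

/-- `κ n`, the volume of the unit ball in `ℝⁿ`. -/
noncomputable def kappa (n : ℕ) : ℝ := Real.pi ^ ((n : ℝ) / 2) / Real.Gamma ((n : ℝ) / 2 + 1)

/-!
Taking logarithms,
`(1/n) log T_n = (log κ_n - log κ_{n-1}) - (1/n) log κ_n - log (γ_n / n)`,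
so only the increments of `log κ` matter. Since `κ` is log-concave and
`κ_{n+2} = 2π / (n + 2) · κ_n`, the ratio `κ_n / κ_{n-1}` is squeezed between
`√(2π / (n + 1))` and `√(2π / n)`, whence `log κ_n - log κ_{n-1} = (log (2π) - log n) / 2 + o(1)`.
By Cesàro summation the mean `(1/n) log κ_n` of these increments is
`(log (2π) - (log n - 1)) / 2 + o(1)`, the mean of `log 1, …, log n` being `log n - 1 + o(1)`.
The difference of the two tends to `-1/2`.
-/

open scoped Topology

section Cesaro

lemma tendsto_inv_smul_of_tendsto_succ_sub {E : Type*} [NormedAddCommGroup E] [NormedSpace ℝ E]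
    {u : ℕ → E} {L : E} (h : Tendsto (fun n => u (n + 1) - u n) atTop (𝓝 L)) :
    Tendsto (fun n : ℕ => (n : ℝ)⁻¹ • u n) atTop (𝓝 L) := by
  have hconst : Tendsto (fun n : ℕ => (n : ℝ)⁻¹ • u 0) atTop (𝓝 0) := by
    simpa using (tendsto_inv_atTop_nhds_zero_nat (𝕜 := ℝ)).smul_const (u 0)
  simpa only [Finset.sum_range_sub, ← smul_add, sub_add_cancel, add_zero]
    using h.cesaro_smul.add hconst

lemma tendsto_natCast_mul_log_succ_sub_log :
    Tendsto (fun n : ℕ => (n : ℝ) * (log (n + 1) - log n)) atTop (𝓝 1) := by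
  refine ((tendsto_mul_log_one_add_div_atTop 1).comp tendsto_natCast_atTop_atTop).congr' ?_
  filter_upwards [eventually_ne_atTop 0] with n hn
  have hn' : (n : ℝ) ≠ 0 := Nat.cast_ne_zero.2 hn
  rw [Function.comp_apply, ← log_div (Nat.cast_add_one_ne_zero n) hn', add_div, div_self hn',
    add_comm]

-- Subtracting `c * n * log n` from `u n` makes the increments converge, to `L - c`.
lemma tendsto_div_sub_mul_log_of_tendsto_succ_sub {u : ℕ → ℝ} {c L : ℝ}
    (h : Tendsto (fun n : ℕ => u (n + 1) - u n - c * log (n + 1)) atTop (𝓝 L)) :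
    Tendsto (fun n : ℕ => u n / n - c * log n) atTop (𝓝 (L - c)) := by
  have hincr : Tendsto (fun n : ℕ =>
      (u (n + 1) - c * ((n + 1 : ℕ) * log (n + 1 : ℕ))) - (u n - c * (n * log n)))
      atTop (𝓝 (L - c)) := by
    have hlog := tendsto_natCast_mul_log_succ_sub_log.const_mul c
    rw [mul_one] at hlog
    refine (h.sub hlog).congr fun n => ?_
    push_cast
    ring
  refine (tendsto_inv_smul_of_tendsto_succ_sub
    (u := fun n : ℕ => u n - c * (n * log n)) hincr).congr' ?_
  filter_upwards [eventually_ne_atTop 0] with n hn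
  rw [smul_eq_mul]
  field_simp

end Cesaro

section ExponentialGrowth

variable {α : Type*} {l : Filter α} {r f : α → ℝ} {L : ℝ}

lemma exp_mul_one_div_mul_log_eventuallyEq (hr : Tendsto r l atTop) (hf : ∀ᶠ x in l, 0 < f x) :
    (fun x => exp (r x * (1 / r x * log (f x)))) =ᶠ[l] f := by
  filter_upwards [hr.eventually_ne_atTop 0, hf] with x hrx hfx
  rw [← mul_assoc, mul_one_div_cancel hrx, one_mul, exp_log hfx]

lemma tendsto_zero_of_tendsto_one_div_mul_log_neg (hr : Tendsto r l atTop)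
    (hf : ∀ᶠ x in l, 0 < f x) (h : Tendsto (fun x => 1 / r x * log (f x)) l (𝓝 L))
    (hL : L < 0) : Tendsto f l (𝓝 0) :=
  (tendsto_exp_atBot.comp (hr.atTop_mul_neg hL h)).congr'
    (exp_mul_one_div_mul_log_eventuallyEq hr hf)

lemma tendsto_atTop_of_tendsto_one_div_mul_log_pos (hr : Tendsto r l atTop)
    (hf : ∀ᶠ x in l, 0 < f x) (h : Tendsto (fun x => 1 / r x * log (f x)) l (𝓝 L))
    (hL : 0 < L) : Tendsto f l atTop :=
  (tendsto_exp_atTop.comp (hr.atTop_mul_pos hL h)).congr'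
    (exp_mul_one_div_mul_log_eventuallyEq hr hf)

end ExponentialGrowth

section Kappa

lemma kappa_pos (n : ℕ) : 0 < kappa n :=
  div_pos (by positivity) (Gamma_pos_of_pos (by positivity))

lemma log_kappa (n : ℕ) : log (kappa n) = n / 2 * log π - log (Gamma (n / 2 + 1)) := by
  have hΓ : Gamma ((n : ℝ) / 2 + 1) ≠ 0 := (Gamma_pos_of_pos (by positivity)).ne'
  rw [kappa, log_div (by positivity) hΓ, log_rpow pi_pos]

lemma kappa_add_two (n : ℕ) : kappa (n + 2) = 2 * π / (n + 2) * kappa n := by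
  have hn : (n : ℝ) / 2 + 1 ≠ 0 := by positivity
  have hhalf : ((n + 2 : ℕ) : ℝ) / 2 = n / 2 + 1 := by push_cast; ring
  rw [kappa, kappa, hhalf, Gamma_add_one hn, rpow_add_one pi_ne_zero]
  field_simp

lemma two_mul_log_Gamma_midpoint_le {x y : ℝ} (hx : 0 < x) (hy : 0 < y) :
    2 * log (Gamma ((x + y) / 2)) ≤ log (Gamma x) + log (Gamma y) := by
  have h := convexOn_log_Gamma.2 (Set.mem_Ioi.2 hx) (Set.mem_Ioi.2 hy)
    one_half_pos.le one_half_pos.le (add_halves 1)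
  have hmid : 1 / 2 * x + 1 / 2 * y = (x + y) / 2 := by ring
  simp only [smul_eq_mul, Function.comp_apply, hmid] at h
  linarith

lemma log_kappa_add_log_kappa_add_two_le (n : ℕ) :
    log (kappa n) + log (kappa (n + 2)) ≤ 2 * log (kappa (n + 1)) := by
  have h := two_mul_log_Gamma_midpoint_le (x := (n : ℝ) / 2 + 1) (y := (n + 2) / 2 + 1)
    (by positivity) (by positivity)
  have hmid : ((n : ℝ) / 2 + 1 + ((n + 2) / 2 + 1)) / 2 = (n + 1) / 2 + 1 := by ring
  rw [hmid] at h
  rw [log_kappa, log_kappa, log_kappa]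
  push_cast
  linarith

lemma log_kappa_add_two (n : ℕ) :
    log (kappa (n + 2)) = log (2 * π) - log (n + 2) + log (kappa n) := by
  rw [kappa_add_two, log_mul (by positivity) (kappa_pos n).ne',
    log_div (by positivity) (by positivity)]

lemma le_log_kappa_succ_sub_log_kappa (n : ℕ) :
    (log (2 * π) - log (n + 2)) / 2 ≤ log (kappa (n + 1)) - log (kappa n) := by
  linarith [log_kappa_add_two n, log_kappa_add_log_kappa_add_two_le n]

lemma log_kappa_succ_sub_log_kappa_le {n : ℕ} (hn : n ≠ 0) :
    log (kappa (n + 1)) - log (kappa n) ≤ (log (2 * π) - log (n + 1)) / 2 := by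
  obtain ⟨m, rfl⟩ := Nat.exists_eq_add_one_of_ne_zero hn
  push_cast
  rw [add_assoc (m : ℝ), one_add_one_eq_two]
  linarith [log_kappa_add_two m, log_kappa_add_log_kappa_add_two_le m]

lemma tendsto_log_kappa_succ_sub_log_kappa :
    Tendsto (fun n : ℕ => log (kappa (n + 1)) - log (kappa n) - -1 / 2 * log (n + 1)) atTop
      (𝓝 (log (2 * π) / 2)) := by
  have hlower : Tendsto (fun n : ℕ => log (2 * π) / 2 - (log (n + 2) - log (n + 1)) / 2) atTop
      (𝓝 (log (2 * π) / 2)) := by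
    have h := (tendsto_log_nat_add_one_sub_log.comp (tendsto_add_atTop_nat 1)).div_const 2
    simpa [add_assoc, one_add_one_eq_two] using h.const_sub (log (2 * π) / 2)
  refine tendsto_of_tendsto_of_tendsto_of_le_of_le' hlower tendsto_const_nhds
    (.of_forall fun n => ?_) ?_
  · linarith [le_log_kappa_succ_sub_log_kappa n]
  · filter_upwards [eventually_ne_atTop 0] with n hn
    linarith [log_kappa_succ_sub_log_kappa_le hn]

lemma tendsto_log_kappa_sub_log_kappa_pred_sub_div :
    Tendsto (fun n : ℕ => log (kappa n) - log (kappa (n - 1)) - log (kappa n) / n) atTop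
      (𝓝 (-1 / 2)) := by
  have hincr : Tendsto (fun n : ℕ => log (kappa n) - log (kappa (n - 1)) - -1 / 2 * log n) atTop
      (𝓝 (log (2 * π) / 2)) := by
    rw [← tendsto_add_atTop_iff_nat 1]
    simpa only [Nat.cast_add_one, Nat.add_sub_cancel] using tendsto_log_kappa_succ_sub_log_kappa
  have hmean := tendsto_div_sub_mul_log_of_tendsto_succ_sub (u := fun n => log (kappa n))
    tendsto_log_kappa_succ_sub_log_kappa
  have h := hincr.sub hmean
  rw [sub_sub_cancel] at h
  exact h.congr fun n => sub_sub_sub_cancel_right _ _ _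

end Kappa

section TypicalCell

/-- The expected volume of the typical cell of a stationary isotropic Poisson hyperplane
tessellation of intensity `γ` in `ℝⁿ`, for `0 < n`, given by its closed form; the subtraction
`n - 1` is truncated at `n = 0`. -/
noncomputable def typicalCellVolume (n : ℕ) (γ : ℝ) : ℝ :=
  1 / kappa n * (n * kappa n / (γ * kappa (n - 1))) ^ n

variable {n : ℕ} {γ : ℝ}

lemma typicalCellVolume_pos (hn : 0 < n) (hγ : 0 < γ) : 0 < typicalCellVolume n γ := by
  have hκ := kappa_pos n
  have hκ' := kappa_pos (n - 1)
  unfold typicalCellVolume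
  positivity

lemma one_div_mul_log_typicalCellVolume (hn : 0 < n) (hγ : 0 < γ) :
    1 / n * log (typicalCellVolume n γ) =
      log (kappa n) - log (kappa (n - 1)) - log (kappa n) / n - log (γ / n) := by
  have hn' : (n : ℝ) ≠ 0 := Nat.cast_ne_zero.2 hn.ne'
  have hκ := (kappa_pos n).ne'
  have hκ' := (kappa_pos (n - 1)).ne'
  have hbase : n * kappa n / (γ * kappa (n - 1)) ≠ 0 :=
    div_ne_zero (mul_ne_zero hn' hκ) (mul_ne_zero hγ.ne' hκ')
  rw [typicalCellVolume, log_mul (one_div_ne_zero hκ) (pow_ne_zero n hbase), one_div (kappa n),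
    log_inv, log_pow, log_div (mul_ne_zero hn' hκ) (mul_ne_zero hγ.ne' hκ'), log_mul hn' hκ,
    log_mul hγ.ne' hκ', log_div hγ.ne' hn']
  field_simp
  ring

lemma tendsto_one_div_mul_log_typicalCellVolume {ρ : ℝ} (hρ : 0 < ρ) {γ : ℕ → ℝ}
    (hγ : Tendsto (fun n : ℕ => γ n / n) atTop (𝓝 ρ)) :
    Tendsto (fun n : ℕ => 1 / (n : ℝ) * log (typicalCellVolume n (γ n))) atTop
      (𝓝 (-log ρ - 1 / 2)) := by
  have h := tendsto_log_kappa_sub_log_kappa_pred_sub_div.sub (hγ.log hρ.ne')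
  rw [show -1 / 2 - log ρ = -log ρ - 1 / 2 by ring] at h
  refine h.congr' ?_
  filter_upwards [eventually_gt_atTop 0, hγ.eventually_const_lt hρ] with n hn hratio
  have hγn : 0 < γ n := (div_pos_iff_of_pos_right (Nat.cast_pos.2 hn)).1 hratio
  exact (one_div_mul_log_typicalCellVolume hn hγn).symm

end TypicalCell

lemma one_div_sqrt_exp_one : 1 / √(exp 1) = exp (-(1 / 2)) := by
  rw [← exp_half, one_div, exp_neg]

/-- Asymptotics and threshold for the expected volume of the typical cell
`T_n = (1/κ_n) (n κ_n / (γ_n κ_{n-1}))^n` when `γ_n ∼ ρ n`. -/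
theorem typical_cell_volume_threshold (ρ : ℝ) (hρ : 0 < ρ)
    (γ : ℕ → ℝ) (hγpos : ∀ n, 0 < γ n)
    (hγ : Tendsto (fun n : ℕ => γ n / (n : ℝ)) atTop (nhds ρ))
    (T : ℕ → ℝ)
    (hT : ∀ n : ℕ, T n =
      (1 / kappa n) * (((n : ℝ) * kappa n) / (γ n * kappa (n - 1))) ^ n) :
    Tendsto (fun n : ℕ => (1 / (n : ℝ)) * Real.log (T n)) atTop
      (nhds (-Real.log ρ - 1 / 2)) ∧
    (ρ > 1 / Real.sqrt (Real.exp 1) → Tendsto T atTop (nhds 0)) ∧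
    (ρ < 1 / Real.sqrt (Real.exp 1) → Tendsto T atTop atTop) := by
  obtain rfl : T = fun n => typicalCellVolume n (γ n) := funext hT
  have hlim := tendsto_one_div_mul_log_typicalCellVolume hρ hγ
  have hpos : ∀ᶠ n in atTop, 0 < typicalCellVolume n (γ n) :=
    (eventually_gt_atTop 0).mono fun n hn => typicalCellVolume_pos hn (hγpos n)
  rw [one_div_sqrt_exp_one]
  refine ⟨hlim, fun hgt => ?_, fun hlt => ?_⟩
  · have hlog : -(1 / 2) < log ρ := (lt_log_iff_exp_lt hρ).2 hgt
    exact tendsto_zero_of_tendsto_one_div_mul_log_neg tendsto_natCast_atTop_atTop hpos hlim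
      (by linarith)
  · have hlog : log ρ < -(1 / 2) := (log_lt_iff_lt_exp hρ).2 hlt
    exact tendsto_atTop_of_tendsto_one_div_mul_log_pos tendsto_natCast_atTop_atTop hpos hlim
      (by linarith)
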